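/- For each d, let x^{(d)} be drawn from the uniform distribution on the cube [-1,1]^d and let r₂(d) = (2/√π)·Γ(d/2 + 1)^{1/d}. Then the probability that ‖x^{(d)}‖₂ ≤ r₂(d) tends to 0 as d → ∞; i.e., a uniform random point of the ℓ∞ unit ball asymptotically almost surely lies outside the Euclidean ball of equal volume. -/

import Mathlib

open MeasureTheory ENNReal Filter

/-- The radius for which the Euclidean ball in `ℝ^d` has the same Lebesgue volume as the
`ℓ∞` ball of radius `1`: `r₂(d) = (2/√π) · Γ(d/2 + 1)^(1/d)`. -/
noncomputable def r2 (d : ℕ) : ℝ :=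
  (2 / Real.sqrt Real.pi) * Real.Gamma ((d : ℝ) / 2 + 1) ^ ((1 : ℝ) / d)

lemma aux_Gamma_le (s : ℝ) (hs : 0 < s) :
    Real.Gamma (s + 1) ≤ 4 * (4 * s / (3 * Real.exp 1)) ^ s := by
  have h0 := Real.integral_rpow_mul_exp_neg_mul_Ioi (a := 1) (r := 1/4) one_pos (by norm_num)
  have hI : IntegrableOn (fun t : ℝ => t ^ ((1:ℝ) - 1) * Real.exp (-(1/4 * t))) (Set.Ioi 0) := by
    by_contra h
    rw [integral_undef h] at h0
    norm_num at h0
  have hpt : ∀ x ∈ Set.Ioi (0:ℝ), Real.exp (-x) * x ^ (s + 1 - 1) ≤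
      (4 * s / (3 * Real.exp 1)) ^ s * (x ^ ((1:ℝ) - 1) * Real.exp (-(1/4 * x))) := by
    intro x hx
    have hx : 0 < x := hx
    have e1 := Real.add_one_le_exp (3 * x / (4 * s) - 1)
    have hx2 : x ≤ (4 * s / (3 * Real.exp 1)) * Real.exp (3 * x / (4 * s)) := by
      rw [sub_add_cancel, Real.exp_sub] at e1
      have : x = (4 * s / 3) * (3 * x / (4 * s)) := by field_simp
      calc x = (4 * s / 3) * (3 * x / (4 * s)) := this
        _ ≤ (4 * s / 3) * (Real.exp (3 * x / (4 * s)) / Real.exp 1) := by gcongr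
        _ = _ := by field_simp
    have hx3 : x ^ s ≤ (4 * s / (3 * Real.exp 1)) ^ s * Real.exp (3 / 4 * x) := by
      calc x ^ s ≤ ((4 * s / (3 * Real.exp 1)) * Real.exp (3 * x / (4 * s))) ^ s := by gcongr
        _ = _ := by
          rw [Real.mul_rpow (by positivity) (by positivity), ← Real.exp_mul]
          congr 2
          field_simp
    rw [add_sub_cancel_right, sub_self, Real.rpow_zero, one_mul]
    calc Real.exp (-x) * x ^ s
        ≤ Real.exp (-x) * ((4 * s / (3 * Real.exp 1)) ^ s * Real.exp (3 / 4 * x)) := by gcongr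
      _ = (4 * s / (3 * Real.exp 1)) ^ s * (Real.exp (-x) * Real.exp (3 / 4 * x)) := by ring
      _ = _ := by rw [← Real.exp_add]; congr 2; ring
  rw [Real.Gamma_eq_integral (by linarith)]
  calc _ ≤ ∫ x in Set.Ioi (0:ℝ), (4 * s / (3 * Real.exp 1)) ^ s *
        (x ^ ((1:ℝ) - 1) * Real.exp (-(1/4 * x))) :=
        setIntegral_mono_on (Real.GammaIntegral_convergent (by linarith)) (hI.const_mul _)
          measurableSet_Ioi hpt
    _ = _ := by
      rw [integral_const_mul, h0]
      norm_num
      ring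

lemma aux_r2_le : ∀ᶠ d : ℕ in atTop, r2 d ^ 2 ≤ 8 / 25 * d := by
  have ht : Tendsto (fun d : ℕ => ((4:ℝ) ^ ((1:ℝ) / d)) ^ 2) atTop (nhds 1) := by
    have h1 : Tendsto (fun d : ℕ => (1:ℝ) / d) atTop (nhds 0) := tendsto_one_div_atTop_nhds_zero_nat
    have h2 := ((Real.continuous_const_rpow (a := 4) (by norm_num)).tendsto 0).comp h1
    simpa using h2.pow 2
  filter_upwards [ht.eventually_le_const (show (1:ℝ) < 1.02 by norm_num), eventually_gt_atTop 0]
    with d h4 hd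
  have hd : (0:ℝ) < d := by exact_mod_cast hd
  have hG := aux_Gamma_le (d / 2) (by positivity)
  have hG0 : 0 < Real.Gamma ((d:ℝ) / 2 + 1) := Real.Gamma_pos_of_pos (by positivity)
  set A : ℝ := 4 * (d / 2) / (3 * Real.exp 1) with hA
  have hA0 : 0 < A := by positivity
  have hle : Real.Gamma ((d:ℝ) / 2 + 1) ^ ((1:ℝ) / d) ≤ (4:ℝ) ^ ((1:ℝ) / d) * Real.sqrt A := by
    calc _ ≤ (4 * A ^ ((d:ℝ) / 2)) ^ ((1:ℝ) / d) := by gcongr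
      _ = _ := by
        rw [Real.mul_rpow (by norm_num) (by positivity), ← Real.rpow_mul hA0.le, Real.sqrt_eq_rpow]
        congr 2
        field_simp
  have hsq : (Real.Gamma ((d:ℝ) / 2 + 1) ^ ((1:ℝ) / d)) ^ 2 ≤ 1.02 * A := by
    calc _ ≤ ((4:ℝ) ^ ((1:ℝ) / d) * Real.sqrt A) ^ 2 := by gcongr
      _ = ((4:ℝ) ^ ((1:ℝ) / d)) ^ 2 * A := by rw [mul_pow, Real.sq_sqrt hA0.le]
      _ ≤ _ := by gcongr
  unfold r2
  rw [mul_pow, div_pow, Real.sq_sqrt Real.pi_pos.le]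
  have hpi := Real.pi_gt_d2
  have he := Real.exp_one_gt_d9
  calc _ ≤ 2 ^ 2 / Real.pi * (1.02 * A) := by gcongr
    _ = (8.16 / (3 * (Real.pi * Real.exp 1))) * d := by rw [hA]; field_simp; norm_num
    _ ≤ _ := by
      refine mul_le_mul_of_nonneg_right ?_ hd.le
      rw [div_le_iff₀ (by positivity)]
      have : (3.14:ℝ) * 2.718 ≤ Real.pi * Real.exp 1 := by gcongr; linarith
      nlinarith

/-- polynomial upper bound for `exp (t (c - y²))`, `t = 1/10`, `c = 8/25`. -/
noncomputable def auxq (y : ℝ) : ℝ := 1 + 1/10 * (8/25 - y^2) + (1/10 * (8/25 - y^2))^2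

noncomputable def auxg : ℝ → ℝ := (Set.Icc (-1:ℝ) 1).indicator auxq

lemma auxq_ge (y : ℝ) (hy : |y| ≤ 1) : Real.exp (1/10 * (8/25 - y^2)) ≤ auxq y := by
  have h : y ^ 2 ≤ 1 := by rwa [sq_le_one_iff_abs_le_one]
  have := Real.abs_exp_sub_one_sub_id_le (x := 1/10 * (8/25 - y^2))
    (by rw [abs_le]; constructor <;> nlinarith [sq_nonneg y])
  unfold auxq
  linarith [(abs_le.mp this).2]

lemma auxq_cont : Continuous auxq := by unfold auxq; fun_prop

lemma auxg_nonneg (y : ℝ) : 0 ≤ auxg y := by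
  unfold auxg
  apply Set.indicator_nonneg
  intro x hx
  exact (Real.exp_pos _).le.trans (auxq_ge x (abs_le.mpr hx))

lemma auxg_int : Integrable auxg := by
  unfold auxg
  rw [integrable_indicator_iff measurableSet_Icc]
  exact auxq_cont.continuousOn.integrableOn_compact isCompact_Icc

lemma auxg_integral : ∫ y, auxg y < 2 := by
  unfold auxg
  rw [integral_indicator measurableSet_Icc, integral_Icc_eq_integral_Ioc,
    ← intervalIntegral.integral_of_le (by norm_num)]
  have : auxq = fun y => (1 + 1/10*(8/25) + (1/10*(8/25))^2) + (-(1/10) - 2*(1/100)*(8/25)) * y^2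
      + 1/100 * y^4 := by
    funext y; unfold auxq; ring
  rw [this, intervalIntegral.integral_add, intervalIntegral.integral_add]
  · simp only [intervalIntegral.integral_const_mul, integral_pow, intervalIntegral.integral_const]
    norm_num
  all_goals exact Continuous.intervalIntegrable (by fun_prop) _ _

lemma aux_vol (d : ℕ) (hr : r2 d ^ 2 ≤ 8 / 25 * d) :
    volume ({x : EuclideanSpace ℝ (Fin d) | ‖x‖ ≤ r2 d} ∩
      {x : EuclideanSpace ℝ (Fin d) | ∀ i, |x i| ≤ 1}) ≤ ENNReal.ofReal (∫ y, auxg y) ^ d := by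
  set S := ({x : EuclideanSpace ℝ (Fin d) | ‖x‖ ≤ r2 d} ∩
      {x : EuclideanSpace ℝ (Fin d) | ∀ i, |x i| ≤ 1}) with hS
  have hSm : MeasurableSet S := by
    apply IsClosed.measurableSet
    apply IsClosed.inter
    · exact isClosed_le continuous_norm continuous_const
    · simp only [Set.ofPred_forall]
      exact isClosed_iInter fun i => isClosed_le (by fun_prop) continuous_const
  rw [← (PiLp.volume_preserving_toLp (Fin d)).measure_preimage hSm.nullMeasurableSet]
  have hSm' := (PiLp.volume_preserving_toLp (Fin d)).measurable hSm
  rw [← lintegral_indicator_one hSm']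
  calc _ ≤ ∫⁻ x : Fin d → ℝ, ENNReal.ofReal (∏ i, auxg (x i)) := by
        apply lintegral_mono
        intro x
        apply Set.indicator_le
        intro x hx
        obtain ⟨h1, h2⟩ := hx
        simp only [Set.mem_ofPred_eq] at h1 h2
        simp only [Pi.one_apply, ENNReal.one_le_ofReal]
        have h3 : ∑ i, x i ^ 2 ≤ 8 / 25 * d := by
          have := pow_le_pow_left₀ (norm_nonneg _) h1 2
          rw [EuclideanSpace.norm_sq_eq] at this
          simp only [Real.norm_eq_abs, sq_abs] at this
          exact this.trans hr
        calc (1:ℝ) ≤ Real.exp (∑ i, 1/10 * (8/25 - x i ^2)) := by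
              rw [Real.one_le_exp_iff, ← Finset.mul_sum, Finset.sum_sub_distrib]
              simp
              linarith
          _ = ∏ i, Real.exp (1/10 * (8/25 - x i ^2)) := Real.exp_sum _ _
          _ ≤ _ := by
              apply Finset.prod_le_prod
              · intros; positivity
              · intro i _
                have : auxg (x i) = auxq (x i) :=
                  Set.indicator_of_mem (Set.mem_Icc.mpr (abs_le.mp (h2 i))) _
                rw [this]
                exact auxq_ge _ (h2 i)
    _ = ENNReal.ofReal (∫ x : Fin d → ℝ, ∏ i, auxg (x i)) := by
        rw [ofReal_integral_eq_lintegral_ofReal]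
        · exact Integrable.fintype_prod (fun _ => auxg_int)
        · exact Eventually.of_forall fun x => Finset.prod_nonneg fun i _ => auxg_nonneg _
    _ = _ := by
        rw [integral_fintype_prod_volume_eq_pow, ENNReal.ofReal_pow
          (integral_nonneg auxg_nonneg), Fintype.card_fin]

/-- For `x⁽ᵈ⁾` drawn from the uniform distribution on the cube `[-1,1]^d`
(Lebesgue measure restricted to the cube, divided by `2^d`), the probability that
`‖x⁽ᵈ⁾‖₂ ≤ r₂(d)` tends to `0` as `d → ∞`. -/
theorem uniform_cube_prob_in_equal_volume_euclidean_ball_tendsto_zero :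
    Tendsto (fun d : ℕ =>
      (((2 : ℝ≥0∞) ^ d)⁻¹
          • volume.restrict {x : EuclideanSpace ℝ (Fin d) | ∀ i, |x i| ≤ 1})
          {x : EuclideanSpace ℝ (Fin d) | ‖x‖ ≤ r2 d})
      atTop (nhds 0) := by
  have hlt : (2:ℝ≥0∞)⁻¹ * ENNReal.ofReal (∫ y, auxg y) < 1 := by
    rw [mul_comm, ← div_eq_mul_inv]
    apply ENNReal.div_lt_of_lt_mul
    rw [one_mul]
    exact ENNReal.ofReal_lt_ofNat.mpr auxg_integral
  refine tendsto_of_tendsto_of_tendsto_of_le_of_le' tendsto_const_nhds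
    (ENNReal.tendsto_pow_atTop_nhds_zero_of_lt_one hlt) (Eventually.of_forall fun _ => zero_le) ?_
  filter_upwards [aux_r2_le] with d hd
  rw [Measure.smul_apply, Measure.restrict_apply
    (isClosed_le continuous_norm continuous_const).measurableSet, smul_eq_mul, mul_pow,
    ENNReal.inv_pow]
  gcongr
  exact aux_vol d hd
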